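/- arXiv:1112.5373 — 4 statements merged into one kernel-verified Lean document; each statement's English description precedes it below -/
import Mathlib

section
/- Suppose τ : ℝ → ℝ is measurable with τ(s) ≥ s for all s, the image of ξ under τ equals η, and τ is right-stable, i.e. (ξ ⊗ ξ){(s,t) ∈ ℝ² : t < s ≤ τ(t) < τ(s)} = 0. Then τ is minimal in the following sense: if σ : ℝ → ℝ is another measurable map whose image of ξ equals η and which satisfies s ≤ σ(s) ≤ τ(s) for ξ-almost every s, then ξ{s : σ(s) < τ(s)} = 0. -/
open MeasureTheory

/-!
For almost every `t`, stability makes the interval `[t, τ t]` nearly invariant: almost all of it is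
mapped by `τ` to points `≤ τ t`, and almost no `s < t` has `τ s ∈ [t, τ t)`. Hence for `q ≤ τ t`
the set `{τ ∈ [t, q)}` lies in `[t, τ t]`, so it has finite measure, and it lies in
`{σ ∈ [t, q)}`, which has the same measure. The two sets therefore agree almost everywhere, which
forces `σ = τ` almost everywhere on `[t, τ t]`. Countably many of these intervals cover almost
every `t` with `t < τ t`, and where `τ t = t` the equality `σ t = τ t` is immediate.
-/

open Set

section LinearOrderTopology

variable {α : Type*} [LinearOrder α] [TopologicalSpace α] [OrderTopology α]
  [SecondCountableTopology α]

variable (α) in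
theorem exists_countable_forall_lt_exists_mem_Ioc :
    ∃ D : Set α, D.Countable ∧ ∀ a b, a < b → ∃ q ∈ D, q ∈ Ioc a b := by
  obtain ⟨D, hD, hD_dense⟩ := TopologicalSpace.exists_countable_dense α
  refine ⟨D ∪ {b | ∃ a, a ⋖ b}, hD.union countable_setOfPred_covBy_left, fun a b hab ↦ ?_⟩
  rcases (Ioo a b).eq_empty_or_nonempty with hgap | hne
  · exact ⟨b, .inr ⟨a, hab, fun c hac hcb ↦ hgap.subset ⟨hac, hcb⟩⟩, hab, le_rfl⟩
  · obtain ⟨q, hqD, haq, hqb⟩ := hD_dense.exists_mem_open isOpen_Ioo hne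
    exact ⟨q, .inl hqD, haq, hqb.le⟩

theorem exists_countable_subset_biUnion_Ico {s : Set α} {f : α → α} (hf : ∀ t ∈ s, t < f t) :
    ∃ c ⊆ s, c.Countable ∧ s ⊆ ⋃ t ∈ c, Ico t (f t) := by
  obtain ⟨c, hcs, hc, hc_union⟩ :=
    TopologicalSpace.isOpen_biUnion_countable s (fun t ↦ Ioo t (f t)) fun _ _ ↦ isOpen_Ioo
  set u := s \ ⋃ t ∈ s, Ioo t (f t)
  have hu_disjoint : u.PairwiseDisjoint fun t ↦ Ioo t (f t) := by
    have hu_le {x y : α} (hx : x ∈ u) (hy : y ∈ u) (hxy : x < y) : f x ≤ y :=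
      not_lt.1 fun hlt ↦ hy.2 (mem_biUnion hx.1 ⟨hxy, hlt⟩)
    refine fun x hx y hy hxy ↦ disjoint_left.2 fun z hzx hzy ↦ ?_
    rcases hxy.lt_or_gt with hlt | hgt
    · exact (hu_le hx hy hlt).not_gt (hzy.1.trans hzx.2)
    · exact (hu_le hy hx hgt).not_gt (hzx.1.trans hzy.2)
  have hu : u.Countable := hu_disjoint.countable_of_Ioo fun t ht ↦ hf t ht.1
  refine ⟨c ∪ u, union_subset hcs sdiff_subset, hc.union hu, fun t ht ↦ ?_⟩
  by_cases ht_cover : t ∈ ⋃ t ∈ s, Ioo t (f t)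
  · rw [← hc_union] at ht_cover
    exact biUnion_mono subset_union_left (fun _ _ ↦ Ioo_subset_Ico_self) ht_cover
  · exact mem_biUnion (.inr ⟨ht, ht_cover⟩) (left_mem_Ico.2 (hf t ht))

theorem ae_le_of_forall_ae_lt_imp_lt {Ω : Type*} [MeasurableSpace Ω] {μ : Measure Ω} {f g : Ω → α}
    (h : ∀ q, ∀ᵐ x ∂μ, f x < q → g x < q) : g ≤ᵐ[μ] f := by
  obtain ⟨D, hD, hD_sep⟩ := exists_countable_forall_lt_exists_mem_Ioc α
  filter_upwards [(ae_ball_iff hD).2 fun q _ ↦ h q] with x hx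
  by_contra! hlt
  obtain ⟨q, hqD, hfq, hqg⟩ := hD_sep _ _ hlt
  exact (hx q hqD hfq).not_ge hqg

theorem ae_of_ae_ae_restrict_Icc [MeasurableSpace α] {μ : Measure α} {f : α → α}
    {p : α → Prop} (h : ∀ᵐ t ∂μ, ∀ᵐ s ∂μ.restrict (Icc t (f t)), p s) : ∀ᵐ t ∂μ, t < f t → p t := by
  set good := {t | t < f t ∧ ∀ᵐ s ∂μ.restrict (Icc t (f t)), p s}
  obtain ⟨c, hc_good, hc, hcover⟩ := exists_countable_subset_biUnion_Ico (s := good) fun t ht ↦ ht.1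
  have hp : ∀ᵐ s ∂μ.restrict (⋃ t ∈ c, Icc t (f t)), p s :=
    (ae_restrict_biUnion_iff _ hc p).2 fun t ht ↦ (hc_good ht).2
  filter_upwards [h, ae_imp_of_ae_restrict hp] with t ht hpt hlt
  exact hpt (biUnion_mono subset_rfl (fun _ _ ↦ Ico_subset_Icc_self) (hcover ⟨hlt, ht⟩))

end LinearOrderTopology

section RightStable

variable {α : Type*} [LinearOrder α] [MeasurableSpace α] {μ : Measure α} {σ τ : α → α}

/-- The map `τ` is right-stable with respect to `μ`: for almost no pair `(s, t)` does the later
point `s` lie in `(t, τ t]` and yet get sent beyond `τ t`. -/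
def IsRightStable (μ : Measure α) (τ : α → α) : Prop :=
  (μ.prod μ) {p : α × α | p.2 < p.1 ∧ p.1 ≤ τ p.2 ∧ τ p.2 < τ p.1} = 0

namespace IsRightStable

variable [SFinite μ]

theorem ae_ae_le_of_apply_mem_Ico (hτ : IsRightStable μ τ) :
    ∀ᵐ t ∂μ, ∀ᵐ s ∂μ, τ s ∈ Ico t (τ t) → t ≤ s := by
  have hprod := measure_eq_zero_iff_ae_notMem.1 hτ
  filter_upwards [Measure.ae_ae_of_ae_prod hprod] with t ht
  filter_upwards [ht] with s hs hmem
  by_contra! hlt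
  exact hs ⟨hlt, hmem⟩

theorem ae_ae_apply_le_of_mem_Icc [TopologicalSpace α] [OrderClosedTopology α]
    [SecondCountableTopology α] [OpensMeasurableSpace α] (hτ : IsRightStable μ τ)
    (hτm : Measurable τ) :
    ∀ᵐ t ∂μ, ∀ᵐ s ∂μ, s ∈ Icc t (τ t) → τ s ≤ τ t := by
  have hprod := measure_eq_zero_iff_ae_notMem.1 hτ
  have hmeas : MeasurableSet {p : α × α | p.2 < p.1 ∧ p.1 ≤ τ p.2 ∧ τ p.2 < τ p.1} :=
    (measurableSet_lt measurable_snd measurable_fst).inter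
      ((measurableSet_le measurable_fst (hτm.comp measurable_snd)).inter
        (measurableSet_lt (hτm.comp measurable_snd) (hτm.comp measurable_fst)))
  have hswap := (Measure.ae_ae_comm hmeas.compl).1 (Measure.ae_ae_of_ae_prod hprod)
  filter_upwards [hswap] with t ht
  filter_upwards [ht] with s hs hmem
  rcases hmem.1.eq_or_lt with rfl | hlt
  · rfl
  · exact not_lt.1 fun hτlt ↦ hs ⟨hlt, hmem.2, hτlt⟩

end IsRightStable

variable [TopologicalSpace α] [OpensMeasurableSpace α]

theorem ae_lt_of_lt_of_map_eq [OrderClosedTopology α] {a b q : α}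
    (hσm : Measurable σ) (hτm : Measurable τ)
    (hmap : μ.map σ = μ.map τ) (hle : ∀ᵐ s ∂μ, s ≤ σ s ∧ σ s ≤ τ s)
    (hfin : μ (Icc a b) ≠ ⊤) (hqb : q ≤ b) (hback : ∀ᵐ s ∂μ, τ s ∈ Ico a b → a ≤ s) :
    ∀ᵐ s ∂μ, s ∈ Icc a b → σ s < q → τ s < q := by
  have hτσ : τ ⁻¹' Ico a q ≤ᵐ[μ] σ ⁻¹' Ico a q := by
    filter_upwards [hle, hback] with s ⟨hs, hστ⟩ hsa hmem
    exact ⟨(hsa ⟨hmem.1, hmem.2.trans_le hqb⟩).trans hs, hστ.trans_lt hmem.2⟩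
  have hτI : τ ⁻¹' Ico a q ≤ᵐ[μ] Icc a b := by
    filter_upwards [hle, hback] with s ⟨hs, hστ⟩ hsa hmem
    exact ⟨hsa ⟨hmem.1, hmem.2.trans_le hqb⟩, (hs.trans hστ).trans (hmem.2.le.trans hqb)⟩
  have hmeasure : μ (σ ⁻¹' Ico a q) = μ (τ ⁻¹' Ico a q) := by
    rw [← Measure.map_apply hσm measurableSet_Ico, hmap, Measure.map_apply hτm measurableSet_Ico]
  have hτσ_eq : τ ⁻¹' Ico a q =ᵐ[μ] σ ⁻¹' Ico a q :=
    ae_eq_of_ae_subset_of_measure_ge hτσ hmeasure.le (hτm measurableSet_Ico).nullMeasurableSet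
      (hmeasure ▸ ne_top_of_le_ne_top hfin (measure_mono_ae hτI))
  filter_upwards [hle, hτσ_eq.mem_iff] with s ⟨hs, _⟩ hiff hmem hσq
  exact (hiff.2 ⟨hmem.1.trans hs, hσq⟩).2

variable [OrderTopology α] [SecondCountableTopology α]

theorem ae_eq_restrict_Icc_of_map_eq {a b : α} (hσm : Measurable σ) (hτm : Measurable τ)
    (hmap : μ.map σ = μ.map τ) (hle : ∀ᵐ s ∂μ, s ≤ σ s ∧ σ s ≤ τ s)
    (hfin : μ (Icc a b) ≠ ⊤) (hback : ∀ᵐ s ∂μ, τ s ∈ Ico a b → a ≤ s)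
    (hforth : ∀ᵐ s ∂μ, s ∈ Icc a b → τ s ≤ b) :
    σ =ᵐ[μ.restrict (Icc a b)] τ := by
  have hστ : σ ≤ᵐ[μ.restrict (Icc a b)] τ := ae_restrict_of_ae (hle.mono fun _ hs ↦ hs.2)
  refine hστ.antisymm (ae_le_of_forall_ae_lt_imp_lt fun q ↦ ?_)
  rw [ae_restrict_iff' measurableSet_Icc]
  rcases le_or_gt q b with hqb | hbq
  · exact ae_lt_of_lt_of_map_eq hσm hτm hmap hle hfin hqb hback
  · exact hforth.mono fun s hs hmem _ ↦ (hs hmem).trans_lt hbq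

theorem right_stable_minimal_general [CompactIccSpace α] [IsLocallyFiniteMeasure μ]
    (hσm : Measurable σ) (hτm : Measurable τ) (hτ : IsRightStable μ τ)
    (hmap : μ.map σ = μ.map τ) (hle : ∀ᵐ s ∂μ, s ≤ σ s ∧ σ s ≤ τ s) : σ =ᵐ[μ] τ := by
  have hlocal : ∀ᵐ t ∂μ, σ =ᵐ[μ.restrict (Icc t (τ t))] τ := by
    filter_upwards [hτ.ae_ae_le_of_apply_mem_Ico, hτ.ae_ae_apply_le_of_mem_Icc hτm]
      with t hback hforth
    exact ae_eq_restrict_Icc_of_map_eq hσm hτm hmap hle measure_Icc_lt_top.ne hback hforth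
  filter_upwards [hle, ae_of_ae_ae_restrict_Icc hlocal] with t ⟨ht, hστ⟩ heq
  rcases (ht.trans hστ).eq_or_lt with hfix | hlt
  · exact hστ.antisymm (hfix ▸ ht)
  · exact heq hlt

end RightStable

/-- a right-stable allocation `τ` balancing `ξ` and `η` is minimal: any other
balancing map `σ` with `s ≤ σ(s) ≤ τ(s)` for `ξ`-a.e. `s` satisfies `ξ{σ < τ} = 0`. -/
theorem right_stable_minimal (ξ η : Measure ℝ)
    [IsLocallyFiniteMeasure ξ] [IsLocallyFiniteMeasure η]
    (hξd : ∀ x : ℝ, ξ {x} = 0) (hηd : ∀ x : ℝ, η {x} = 0)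
    (hsing : ξ.MutuallySingular η)
    (τ : ℝ → ℝ) (hτm : Measurable τ) (hτge : ∀ s : ℝ, s ≤ τ s)
    (hτmap : Measure.map τ ξ = η)
    (hstable : (ξ.prod ξ) {p : ℝ × ℝ | p.2 < p.1 ∧ p.1 ≤ τ p.2 ∧ τ p.2 < τ p.1} = 0)
    (σ : ℝ → ℝ) (hσm : Measurable σ) (hσmap : Measure.map σ ξ = η)
    (hσle : ∀ᵐ s ∂ξ, s ≤ σ s ∧ σ s ≤ τ s) :
    ξ {s : ℝ | σ s < τ s} = 0 := by
  have hστ := right_stable_minimal_general hσm hτm hstable (hσmap.trans hτmap.symm) hσle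
  simpa only [not_le] using ae_iff.1 hστ.symm.le
end

section
/- (a) For ξ-almost every s ∈ ℝ there exists a sequence s_n with s_n > s, s_n → s, and f(s_n) > f(s) for all n. (b) For η-almost every s ∈ ℝ there exists a sequence s_n with s_n > s, s_n → s, and f(s_n) < f(s) for all n. -/
open MeasureTheory Filter

/-- The function `f(t) = ξ[0,t] − η[0,t]` for `t ≥ 0` and `f(t) = η[t,0] − ξ[t,0]` for `t < 0`. -/
noncomputable def fdiff (ξ η : Measure ℝ) (t : ℝ) : ℝ :=
  if 0 ≤ t then (ξ (Set.Icc 0 t)).toReal - (η (Set.Icc 0 t)).toReal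
  else (η (Set.Icc t 0)).toReal - (ξ (Set.Icc t 0)).toReal

/-!
Let `s` be a point where `f` does not increase immediately to the right, so that
`ξ [s, t] ≤ η [s, t]` for all `t ≥ s` in some neighbourhood `V` of `s`, which may be chosen from a
countable basis. Fix `V` and let `S ⊆ V` be the set of such points. If `U` is open and
`S ⊆ U ⊆ V`, every order component `C` of `U` satisfies `ξ (S ∩ C) ≤ η C`, because `S ∩ C` is
covered by a directed family of intervals `[s, t] ⊆ C` with `s ∈ S ∩ C`. Summing over the components
gives `ξ S ≤ η U`, hence `ξ S ≤ η S` by outer regularity. The same bound holds for every subset of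
`S`, in particular for its part in an `η`-null set carrying `ξ`, so `ξ S = 0`.
-/

section Order

open Set TopologicalSpace

variable {α : Type*} [LinearOrder α]

theorem pairwiseDisjoint_ordConnectedComponent (U : Set α) :
    (ordConnectedSection U).PairwiseDisjoint (ordConnectedComponent U) := by
  refine fun x hx y hy hxy => Set.disjoint_left.2 fun z hzx hzy => hxy ?_
  exact eq_of_mem_ordConnectedSection_of_uIcc_subset hx hy
    (mem_ordConnectedComponent_trans hzx (mem_ordConnectedComponent_comm.1 hzy))

theorem biUnion_ordConnectedComponent (U : Set α) :
    ⋃ x ∈ ordConnectedSection U, ordConnectedComponent U x = U := by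
  refine (iUnion₂_subset fun _ _ => ordConnectedComponent_subset).antisymm fun x hx => ?_
  have hproj : ordConnectedProj U ⟨x, hx⟩ ∈ ordConnectedSection U := mem_range_self _
  exact mem_iUnion₂_of_mem hproj (mem_ordConnectedComponent_ordConnectedProj U ⟨x, hx⟩)

variable [TopologicalSpace α]

theorem exists_countable_subset_isCofinalFor [SecondCountableTopology α] [ClosedIciTopology α]
    (S : Set α) : ∃ D ⊆ S, D.Countable ∧ IsCofinalFor S D := by
  by_cases hmax : ∃ m ∈ S, ∀ x ∈ S, x ≤ m
  · obtain ⟨m, hmS, hm⟩ := hmax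
    exact ⟨{m}, singleton_subset_iff.2 hmS, countable_singleton m, fun x hx => ⟨m, rfl, hm x hx⟩⟩
  · push Not at hmax
    obtain ⟨D, hDS, hD, hUnion⟩ := isOpen_biUnion_countable S Iio fun _ _ => isOpen_Iio
    refine ⟨D, hDS, hD, fun x hx => ?_⟩
    obtain ⟨y, hyS, hxy⟩ := hmax x hx
    obtain ⟨d, hdD, hxd⟩ := mem_iUnion₂.1 (hUnion.symm ▸ mem_biUnion hyS hxy)
    exact ⟨d, hdD, le_of_lt hxd⟩

theorem exists_countable_subset_isCoinitialFor [SecondCountableTopology α] [ClosedIicTopology α]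
    (S : Set α) : ∃ D ⊆ S, D.Countable ∧ IsCoinitialFor S D :=
  exists_countable_subset_isCofinalFor (α := αᵒᵈ) S

theorem isOpen_ordConnectedComponent [OrderTopology α] {U : Set α} (hU : IsOpen U) (x : α) :
    IsOpen (ordConnectedComponent U x) := by
  refine isOpen_iff_mem_nhds.2 fun y hy => ?_
  rw [ordConnectedComponent_eq hy]
  exact ordConnectedComponent_mem_nhds.2 (hU.mem_nhds (ordConnectedComponent_subset hy))

theorem countable_ordConnectedSection [OrderTopology α] [SeparableSpace α] {U : Set α}
    (hU : IsOpen U) : (ordConnectedSection U).Countable :=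
  (pairwiseDisjoint_ordConnectedComponent U).countable_of_isOpen
    (fun x _ => isOpen_ordConnectedComponent hU x)
    (fun _ hx => nonempty_ordConnectedComponent.2 (ordConnectedSection_subset hx))

end Order

section Comparison

open Set Topology TopologicalSpace Function

variable {α : Type*} [LinearOrder α] [TopologicalSpace α] [SecondCountableTopology α]
  [MeasurableSpace α] {ξ η : Measure α} {S : Set α}

theorem measure_le_measure_of_ordConnected [OrderClosedTopology α] {C : Set α} [C.OrdConnected]
    (hSC : S ⊆ C) (h : ∀ s ∈ S, ∀ t ∈ C, ξ (Icc s t) ≤ η (Icc s t)) : ξ S ≤ η C := by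
  obtain ⟨A, hAS, hA, hSA⟩ := exists_countable_subset_isCoinitialFor S
  obtain ⟨B, hBC, hB, hCB⟩ := exists_countable_subset_isCofinalFor C
  have hcover : S ⊆ ⋃ p ∈ A ×ˢ B, Icc p.1 p.2 := fun x hx => by
    obtain ⟨a, haA, hax⟩ := hSA hx
    obtain ⟨b, hbB, hxb⟩ := hCB (hSC hx)
    exact mem_biUnion (mk_mem_prod haA hbB) ⟨hax, hxb⟩
  have hdirected : DirectedOn ((· ⊆ ·) on fun p : α × α => Icc p.1 p.2) (A ×ˢ B) :=
    fun p hp q hq =>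
      ⟨(min p.1 q.1, max p.2 q.2),
        ⟨by rcases min_choice p.1 q.1 with hmin | hmin <;> simp only [hmin, hp.1, hq.1],
          by rcases max_choice p.2 q.2 with hmax | hmax <;> simp only [hmax, hp.2, hq.2]⟩,
        Icc_subset_Icc (min_le_left _ _) (le_max_left _ _),
        Icc_subset_Icc (min_le_right _ _) (le_max_right _ _)⟩
  calc ξ S ≤ ξ (⋃ p ∈ A ×ˢ B, Icc p.1 p.2) := measure_mono hcover
    _ = ⨆ p ∈ A ×ˢ B, ξ (Icc p.1 p.2) := measure_biUnion_eq_iSup (hA.prod hB) hdirected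
    _ ≤ η C := iSup₂_le fun p hp =>
      (h p.1 (hAS hp.1) p.2 (hBC hp.2)).trans
        (measure_mono (C.Icc_subset (hSC (hAS hp.1)) (hBC hp.2)))

variable [OrderTopology α] [OpensMeasurableSpace α]

theorem measure_le_measure_of_isOpen {U : Set α} (hU : IsOpen U) (hSU : S ⊆ U)
    (h : ∀ s ∈ S, ∀ t ∈ U, ξ (Icc s t) ≤ η (Icc s t)) : ξ S ≤ η U := by
  have hcount := countable_ordConnectedSection hU
  calc ξ S = ξ (⋃ x ∈ ordConnectedSection U, S ∩ ordConnectedComponent U x) := by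
        rw [← inter_iUnion₂, biUnion_ordConnectedComponent, inter_eq_left.2 hSU]
    _ ≤ ∑' x : ordConnectedSection U, ξ (S ∩ ordConnectedComponent U x) :=
        measure_biUnion_le ξ hcount _
    _ ≤ ∑' x : ordConnectedSection U, η (ordConnectedComponent U x) :=
        ENNReal.tsum_le_tsum fun _ => measure_le_measure_of_ordConnected inter_subset_right
          fun s hs t ht => h s hs.1 t (ordConnectedComponent_subset ht)
    _ = η (⋃ x ∈ ordConnectedSection U, ordConnectedComponent U x) :=
        (measure_biUnion hcount (pairwiseDisjoint_ordConnectedComponent U)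
          fun x _ => (isOpen_ordConnectedComponent hU x).measurableSet).symm
    _ = η U := by rw [biUnion_ordConnectedComponent]

variable [η.OuterRegular] {V : Set α}

theorem measure_le_measure_of_forall_Icc (hV : IsOpen V) (hSV : S ⊆ V)
    (h : ∀ s ∈ S, ∀ t ∈ V, ξ (Icc s t) ≤ η (Icc s t)) : ξ S ≤ η S := by
  rw [S.measure_eq_iInf_isOpen η]
  refine le_iInf₂ fun U hSU => le_iInf fun hU => ?_
  calc ξ S ≤ η (U ∩ V) := measure_le_measure_of_isOpen (hU.inter hV) (subset_inter hSU hSV)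
        fun s hs t ht => h s hs t ht.2
    _ ≤ η U := measure_mono inter_subset_left

theorem measure_eq_zero_of_forall_Icc_of_mutuallySingular (hsing : ξ.MutuallySingular η)
    (hV : IsOpen V) (hSV : S ⊆ V) (h : ∀ s ∈ S, ∀ t ∈ V, ξ (Icc s t) ≤ η (Icc s t)) :
    ξ S = 0 := by
  obtain ⟨N, -, hξN, hηN⟩ := hsing
  have hdiff : ξ (S \ N) ≤ η (S \ N) :=
    measure_le_measure_of_forall_Icc hV (sdiff_subset.trans hSV) fun s hs => h s hs.1
  have hηdiff : η (S \ N) = 0 := measure_mono_null (fun _ hx => hx.2) hηN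
  exact measure_mono_null (subset_sdiff_union S N)
    (measure_union_null (le_zero_iff.1 (hdiff.trans_eq hηdiff)) hξN)

theorem ae_frequently_measure_Icc_lt (hsing : ξ.MutuallySingular η) :
    ∀ᵐ s ∂ξ, ∃ᶠ t in 𝓝[≥] s, η (Icc s t) < ξ (Icc s t) := by
  have hbasis : ∀ᵐ s ∂ξ, ∀ V ∈ countableBasis α,
      ¬ (s ∈ V ∧ ∀ t ∈ V, ξ (Icc s t) ≤ η (Icc s t)) := by
    refine (ae_ball_iff (countable_countableBasis α)).2 fun V hV =>
      measure_eq_zero_iff_ae_notMem.1 ?_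
    exact measure_eq_zero_of_forall_Icc_of_mutuallySingular hsing (isOpen_of_mem_countableBasis hV)
      (fun _ hs => hs.1) (fun _ hs => hs.2)
  filter_upwards [hbasis] with s hs hev
  obtain ⟨V, hV, hsV, hsub⟩ :=
    (isBasis_countableBasis α).mem_nhds_iff.1 (mem_nhdsWithin_iff_eventually.1 hev)
  refine hs V hV ⟨hsV, fun t ht => ?_⟩
  rcases le_or_gt s t with hst | hts
  · exact not_lt.1 (hsub ht hst)
  · simp only [Icc_eq_empty_of_lt hts, measure_empty, le_refl]

theorem ae_frequently_measure_Icc_lt_of_nullSingletonClass [NullSingletonClass ξ]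
    (hsing : ξ.MutuallySingular η) :
    ∀ᵐ s ∂ξ, ∃ᶠ t in 𝓝[>] s, η (Icc s t) < ξ (Icc s t) := by
  filter_upwards [ae_frequently_measure_Icc_lt hsing] with s hs
  refine frequently_nhdsWithin_iff.2 ((frequently_nhdsWithin_iff.1 hs).mono ?_)
  rintro t ⟨hlt, hst⟩
  refine ⟨hlt, lt_of_le_of_ne hst ?_⟩
  rintro rfl
  simp only [Icc_self, measure_singleton, not_lt_zero] at hlt

end Comparison

section Fdiff

open Set Topology

theorem fdiff_swap (ξ η : Measure ℝ) (t : ℝ) : fdiff η ξ t = -fdiff ξ η t := by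
  unfold fdiff
  split_ifs <;> ring

variable (ξ η : Measure ℝ) [NullSingletonClass ξ] [NullSingletonClass η]

theorem fdiff_eq_intervalIntegral (t : ℝ) :
    fdiff ξ η t = (∫ _ in (0 : ℝ)..t, (1 : ℝ) ∂ξ) - ∫ _ in (0 : ℝ)..t, (1 : ℝ) ∂η := by
  simp only [fdiff, intervalIntegral.integral_const', smul_eq_mul, mul_one, ← measureReal_def,
    ← measureReal_congr Ioc_ae_eq_Icc]
  split_ifs with ht
  · simp only [Ioc_eq_empty_of_le ht, measureReal_empty, sub_zero]
  · simp only [Ioc_eq_empty_of_le (le_of_not_ge ht), measureReal_empty, zero_sub, sub_neg_eq_add,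
      neg_add_eq_sub]

variable [IsLocallyFiniteMeasure ξ] [IsLocallyFiniteMeasure η]

theorem fdiff_sub_fdiff {s t : ℝ} (hst : s ≤ t) :
    fdiff ξ η t - fdiff ξ η s = ξ.real (Icc s t) - η.real (Icc s t) := by
  have hsub (μ : Measure ℝ) [NullSingletonClass μ] [IsLocallyFiniteMeasure μ] :
      (∫ _ in (0 : ℝ)..t, (1 : ℝ) ∂μ) - ∫ _ in (0 : ℝ)..s, (1 : ℝ) ∂μ = μ.real (Icc s t) := by
    rw [intervalIntegral.integral_interval_sub_left intervalIntegrable_const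
      intervalIntegrable_const, intervalIntegral.integral_of_le hst, setIntegral_const, smul_eq_mul,
      mul_one, measureReal_congr Ioc_ae_eq_Icc]
  rw [fdiff_eq_intervalIntegral, fdiff_eq_intervalIntegral, ← hsub ξ, ← hsub η]
  ring

theorem fdiff_lt_fdiff_iff {s t : ℝ} (hst : s ≤ t) :
    fdiff ξ η s < fdiff ξ η t ↔ η (Icc s t) < ξ (Icc s t) := by
  rw [← sub_pos, fdiff_sub_fdiff ξ η hst, sub_pos, measureReal_def, measureReal_def,
    ENNReal.toReal_lt_toReal measure_Icc_lt_top.ne measure_Icc_lt_top.ne]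

theorem ae_exists_seq_fdiff_lt (hsing : ξ.MutuallySingular η) :
    ∀ᵐ s ∂ξ, ∃ u : ℕ → ℝ, (∀ n, s < u n) ∧ Tendsto u atTop (𝓝 s) ∧
      ∀ n, fdiff ξ η s < fdiff ξ η (u n) := by
  filter_upwards [ae_frequently_measure_Icc_lt_of_nullSingletonClass hsing] with s hs
  obtain ⟨u, hu, hlt⟩ := exists_seq_forall_of_frequently (frequently_nhdsWithin_iff.1 hs)
  exact ⟨u, fun n => (hlt n).2, hu, fun n => (fdiff_lt_fdiff_iff ξ η (hlt n).2.le).2 (hlt n).1⟩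

end Fdiff

/-- (a) for `ξ`-a.e. `s` there is a sequence `sₙ ↓ s`, `sₙ > s`, with
`f(sₙ) > f(s)`; (b) for `η`-a.e. `s` there is a sequence `sₙ ↓ s`, `sₙ > s`, with
`f(sₙ) < f(s)`. -/
theorem fdiff_increase_decrease (ξ η : Measure ℝ)
    [IsLocallyFiniteMeasure ξ] [IsLocallyFiniteMeasure η]
    (hξd : ∀ x : ℝ, ξ {x} = 0) (hηd : ∀ x : ℝ, η {x} = 0)
    (hsing : ξ.MutuallySingular η) :
    (∀ᵐ s ∂ξ, ∃ u : ℕ → ℝ, (∀ n, s < u n) ∧ Tendsto u atTop (nhds s) ∧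
      ∀ n, fdiff ξ η s < fdiff ξ η (u n)) ∧
    (∀ᵐ s ∂η, ∃ u : ℕ → ℝ, (∀ n, s < u n) ∧ Tendsto u atTop (nhds s) ∧
      ∀ n, fdiff ξ η (u n) < fdiff ξ η s) := by
  have : NullSingletonClass ξ := ⟨hξd⟩
  have : NullSingletonClass η := ⟨hηd⟩
  refine ⟨ae_exists_seq_fdiff_lt ξ η hsing, ?_⟩
  filter_upwards [ae_exists_seq_fdiff_lt η ξ hsing.symm] with s ⟨u, hsu, hu, hlt⟩
  refine ⟨u, hsu, hu, fun n => ?_⟩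
  simpa only [fdiff_swap ξ η, neg_lt_neg_iff] using hlt n
end

section
/- Let ξ be a diffuse (atomless) locally finite Borel measure on ℝ with ξ((−∞,0)) = ξ((0,∞)) = ∞. For r ≥ 0 define τ^r(s) := sup{t ≥ s : ξ([s,t]) = r}. Then for all real a < b, ξ{s ∈ ℝ : a ≤ τ^r(s) < b} = ξ([a,b]); that is, the image of ξ under τ^r equals ξ. -/
open MeasureTheory

/-- `τʳ(s) = sup {t ≥ s : ξ[s,t] = r}` (a real supremum). -/
noncomputable def tauSup (ξ : Measure ℝ) (r s : ℝ) : ℝ :=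
  sSup {t : ℝ | s ≤ t ∧ ξ (Set.Icc s t) = ENNReal.ofReal r}

/-!
Let `F x` be the signed `ξ`-mass between `0` and `x`. Under the hypotheses `F` is continuous,
nondecreasing and onto, and it carries `ξ` to Lebesgue measure. In the coordinate `F` the map `τʳ`
is the translation by `r`: `τʳ(s)` is the largest `t` with `F t ≤ F s + r`. Hence
`{a ≤ τʳ < b} = F ⁻¹' [F a - r, F b - r)`, whose `ξ`-mass is `F b - F a = ξ [a, b]`.
-/

open Filter Set
open scoped Topology

theorem exists_preimage_Iic_eq_Iic {α β : Type*}
    [ConditionallyCompleteLinearOrder α] [TopologicalSpace α] [OrderTopology α]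
    [LinearOrder β] [NoMaxOrder β] [TopologicalSpace β] [ClosedIicTopology β]
    {f : α → β} (hcont : Continuous f) (hmono : Monotone f) (hsurj : f.Surjective) (v : β) :
    ∃ c, f c = v ∧ f ⁻¹' Iic v = Iic c := by
  obtain ⟨x, hx⟩ := hsurj v
  have hbdd : BddAbove (f ⁻¹' Iic v) := by
    obtain ⟨w, hvw⟩ := exists_gt v
    obtain ⟨y, rfl⟩ := hsurj w
    exact ⟨y, fun t ht ↦ (hmono.reflect_lt (lt_of_le_of_lt ht hvw)).le⟩
  have hsSup : f (sSup (f ⁻¹' Iic v)) ≤ v :=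
    (isClosed_Iic.preimage hcont).csSup_mem ⟨x, hx.le⟩ hbdd
  refine ⟨sSup (f ⁻¹' Iic v), hsSup.antisymm ?_, ?_⟩
  · exact hx.ge.trans (hmono (le_csSup hbdd hx.le))
  · exact Subset.antisymm (fun t ht ↦ le_csSup hbdd ht) fun t ht ↦ (hmono ht).trans hsSup

/-- The distribution function of a locally finite measure on `ℝ`, normalised to vanish at `0`:
the mass of `(0, x]` for `0 ≤ x`, and minus the mass of `(x, 0]` for `x ≤ 0`. It serves as the
coordinate in which `tauSup` is a translation; the sign is that of the interval integral. -/
noncomputable def distributionFun (ξ : Measure ℝ) (x : ℝ) : ℝ :=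
  ∫ _ in (0 : ℝ)..x, (1 : ℝ) ∂ξ

section DistributionFun

variable (ξ : Measure ℝ)

theorem distributionFun_zero : distributionFun ξ 0 = 0 :=
  intervalIntegral.integral_same

variable [IsLocallyFiniteMeasure ξ]

theorem distributionFun_sub {x y : ℝ} (hxy : x ≤ y) :
    distributionFun ξ y - distributionFun ξ x = ξ.real (Ioc x y) := by
  rw [distributionFun, distributionFun, intervalIntegral.integral_interval_sub_left
    intervalIntegrable_const intervalIntegrable_const, intervalIntegral.integral_of_le hxy]
  simp

theorem distributionFun_mono : Monotone (distributionFun ξ) := fun _ _ hxy ↦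
  sub_nonneg.1 (distributionFun_sub ξ hxy ▸ measureReal_nonneg)

theorem measure_Ioc_eq_ofReal_distributionFun_sub (x y : ℝ) :
    ξ (Ioc x y) = ENNReal.ofReal (distributionFun ξ y - distributionFun ξ x) := by
  rcases le_total x y with hxy | hyx
  · rw [distributionFun_sub ξ hxy, ofReal_measureReal measure_Ioc_lt_top.ne]
  · rw [Ioc_eq_empty hyx.not_gt, measure_empty,
      ENNReal.ofReal_of_nonpos (sub_nonpos.2 (distributionFun_mono ξ hyx))]

variable {ξ}

theorem tendsto_distributionFun_atTop (hright : ξ (Ioi 0) = ⊤) :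
    Tendsto (distributionFun ξ) atTop atTop := by
  have hlim : Tendsto (fun x ↦ ξ (Ioc 0 x)) atTop (𝓝 ⊤) := by
    rw [← hright, ← iUnion_Ioc_right]
    exact tendsto_measure_iUnion_atTop fun _ _ h ↦ Ioc_subset_Ioc_right h
  simpa only [measure_Ioc_eq_ofReal_distributionFun_sub, distributionFun_zero, sub_zero,
    ENNReal.tendsto_ofReal_nhds_top] using hlim

theorem tendsto_distributionFun_atBot (hleft : ξ (Iio 0) = ⊤) :
    Tendsto (distributionFun ξ) atBot atBot := by
  have hlim : Tendsto (fun x ↦ ξ (Ioc x 0)) atBot (𝓝 ⊤) := by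
    rw [← measure_mono_top Iio_subset_Iic_self hleft]
    exact tendsto_measure_Ioc_atBot ξ 0
  simpa only [measure_Ioc_eq_ofReal_distributionFun_sub, distributionFun_zero, zero_sub,
    ENNReal.tendsto_ofReal_nhds_top, tendsto_neg_atTop_iff] using hlim

variable [NullSingletonClass ξ]

variable (ξ) in
theorem continuous_distributionFun : Continuous (distributionFun ξ) :=
  intervalIntegral.continuous_primitive (fun _ _ ↦ intervalIntegrable_const) 0

variable (ξ) in
theorem measure_Icc_eq_ofReal_distributionFun_sub (x y : ℝ) :
    ξ (Icc x y) = ENNReal.ofReal (distributionFun ξ y - distributionFun ξ x) := by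
  rw [← measure_Ioc_eq_ofReal_distributionFun_sub, measure_congr Ioc_ae_eq_Icc]

theorem surjective_distributionFun (hleft : ξ (Iio 0) = ⊤) (hright : ξ (Ioi 0) = ⊤) :
    (distributionFun ξ).Surjective :=
  (continuous_distributionFun ξ).surjective (tendsto_distributionFun_atTop hright)
    (tendsto_distributionFun_atBot hleft)

theorem exists_preimage_distributionFun_Iic_eq_Iic (hleft : ξ (Iio 0) = ⊤)
    (hright : ξ (Ioi 0) = ⊤) (v : ℝ) :
    ∃ c, distributionFun ξ c = v ∧ distributionFun ξ ⁻¹' Iic v = Iic c :=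
  exists_preimage_Iic_eq_Iic (continuous_distributionFun ξ) (distributionFun_mono ξ)
    (surjective_distributionFun hleft hright) v

theorem measurePreserving_distributionFun (hleft : ξ (Iio 0) = ⊤) (hright : ξ (Ioi 0) = ⊤) :
    MeasurePreserving (distributionFun ξ) ξ volume := by
  have hmeas : Measurable (distributionFun ξ) := (continuous_distributionFun ξ).measurable
  refine ⟨hmeas, (Measure.ext_of_Ioc _ _ fun u v _ ↦ ?_).symm⟩
  obtain ⟨c, rfl, hc⟩ := exists_preimage_distributionFun_Iic_eq_Iic hleft hright u
  obtain ⟨d, rfl, hd⟩ := exists_preimage_distributionFun_Iic_eq_Iic hleft hright v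
  rw [Measure.map_apply hmeas measurableSet_Ioc, Real.volume_Ioc, ← Iic_sdiff_Iic, preimage_sdiff,
    hc, hd, Iic_sdiff_Iic, measure_Ioc_eq_ofReal_distributionFun_sub]

end DistributionFun

section TauSup

variable {ξ : Measure ℝ} [IsLocallyFiniteMeasure ξ] [NullSingletonClass ξ] {r : ℝ}

theorem measure_Icc_eq_ofReal_iff (hr : 0 ≤ r) {s t : ℝ} (hst : s ≤ t) :
    ξ (Icc s t) = ENNReal.ofReal r ↔ distributionFun ξ t = distributionFun ξ s + r := by
  rw [measure_Icc_eq_ofReal_distributionFun_sub,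
    ENNReal.ofReal_eq_ofReal_iff (sub_nonneg.2 (distributionFun_mono ξ hst)) hr,
    sub_eq_iff_eq_add']

theorem le_tauSup_iff (hleft : ξ (Iio 0) = ⊤) (hright : ξ (Ioi 0) = ⊤) (hr : 0 ≤ r) {s t : ℝ} :
    t ≤ tauSup ξ r s ↔ distributionFun ξ t ≤ distributionFun ξ s + r := by
  obtain ⟨c, hFc, hc⟩ :=
    exists_preimage_distributionFun_Iic_eq_Iic hleft hright (distributionFun ξ s + r)
  have le_c_iff (x : ℝ) : distributionFun ξ x ≤ distributionFun ξ s + r ↔ x ≤ c :=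
    Set.ext_iff.1 hc x
  have hsc : s ≤ c := (le_c_iff s).1 (le_add_of_nonneg_right hr)
  have hgreatest : IsGreatest {x | s ≤ x ∧ ξ (Icc s x) = ENNReal.ofReal r} c :=
    ⟨⟨hsc, (measure_Icc_eq_ofReal_iff hr hsc).2 hFc⟩, fun x ⟨hsx, hx⟩ ↦
      (le_c_iff x).1 ((measure_Icc_eq_ofReal_iff hr hsx).1 hx).le⟩
  rw [le_c_iff, tauSup, hgreatest.csSup_eq]

theorem preimage_tauSup_Ico (hleft : ξ (Iio 0) = ⊤) (hright : ξ (Ioi 0) = ⊤) (hr : 0 ≤ r)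
    (a b : ℝ) :
    tauSup ξ r ⁻¹' Ico a b =
      distributionFun ξ ⁻¹' Ico (distributionFun ξ a - r) (distributionFun ξ b - r) := by
  ext s
  simp only [mem_preimage, mem_Ico, ← not_le (b := tauSup ξ r s),
    le_tauSup_iff hleft hright hr, not_le, sub_le_iff_le_add, lt_sub_iff_add_lt]

end TauSup

/-- for a diffuse locally finite measure `ξ` on `ℝ` with infinite mass on both
half-lines and `r ≥ 0`, `ξ{s : a ≤ τʳ(s) < b} = ξ([a,b])` for all `a < b`; that is, the image
of `ξ` under `τʳ` equals `ξ`. -/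
theorem tauSup_balances (ξ : Measure ℝ) [IsLocallyFiniteMeasure ξ]
    (hξd : ∀ x : ℝ, ξ {x} = 0)
    (hleft : ξ (Set.Iio 0) = ⊤) (hright : ξ (Set.Ioi 0) = ⊤)
    (r : ℝ) (hr : 0 ≤ r) :
    ∀ a b : ℝ, a < b →
      ξ {s : ℝ | a ≤ tauSup ξ r s ∧ tauSup ξ r s < b} = ξ (Set.Icc a b) := by
  intro a b _
  have : NullSingletonClass ξ := ⟨hξd⟩
  let F := distributionFun ξ
  calc ξ (tauSup ξ r ⁻¹' Ico a b)
      = ξ (F ⁻¹' Ico (F a - r) (F b - r)) := by rw [preimage_tauSup_Ico hleft hright hr]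
    _ = volume (Ico (F a - r) (F b - r)) :=
        (measurePreserving_distributionFun hleft hright).measure_preimage
          measurableSet_Ico.nullMeasurableSet
    _ = ENNReal.ofReal (F b - F a) := by rw [Real.volume_Ico, sub_sub_sub_cancel_right]
    _ = ξ (Icc a b) := (measure_Icc_eq_ofReal_distributionFun_sub ξ a b).symm
end

section
/- Assume that for every r ∈ ℝ the image measure of Q under the map ω ↦ θ_{S_r(ω)}(ω) equals Q. Fix w > 0 and define the measure Q* on Ω by ∫ f dQ* = w^{−1} ∫_Ω ∫_0^{S_w(ω)} f(θ_s ω) ds Q(dω) for nonnegative measurable f. Then (i) Q* is invariant under every θ_t, t ∈ ℝ, and (ii) Q is the Palm measure of ξ with respect to Q*: for every nonnegative measurable f, ∫_Ω ∫_ℝ 1_{[0,1]}(s) f(θ_s ω) ξ(ω, ds) Q*(dω) = ∫_Ω f dQ. -/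
open MeasureTheory ProbabilityTheory
open scoped ENNReal

/-- The generalised inverse `S_r` of the diffuse random measure `ξ`:
`S_r(ω) = sup {t ≥ 0 : ξ(ω,[0,t]) = r}` for `r ≥ 0` and
`S_r(ω) = sup {t < 0 : ξ(ω,[t,0]) = −r}` for `r < 0`. -/
noncomputable def Sr {Ω : Type*} [MeasurableSpace Ω] (ξ : Kernel Ω ℝ) (r : ℝ) (ω : Ω) : ℝ :=
  if 0 ≤ r then sSup {t : ℝ | 0 ≤ t ∧ ξ ω (Set.Icc 0 t) = ENNReal.ofReal r}
  else sSup {t : ℝ | t < 0 ∧ ξ ω (Set.Icc t 0) = ENNReal.ofReal (-r)}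

/-!
Write `F_ω(s)` for the signed `ξ(ω, ·)`-mass between `0` and `s`, so that `S` inverts `F`, and let
`N` be the image of `Q(dω) ds` under `(ω, s) ↦ (θ_s ω, F_ω(s))`. Moving the origin of `ω` to
`S_{-r}(ω)` translates the second coordinate of `N` by `r`, so mass-stationarity of `Q` makes `N`
translation invariant in that coordinate, and therefore `N = Q*(dω) dx`. Translating `s` instead
shows that `N` is invariant under `(ω, x) ↦ (θ_t ω, x + F_ω(t))`, which makes `Q*` stationary.
Finally `ξ(ω, ·)` is the image of `dx` under `x ↦ S_{-x}(ω)`, and `S_{-F_ω(s)}(θ_s ω) = -s` almost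
everywhere: integrating a function of `(S_{-x}(ω), θ_{S_{-x}(ω)} ω)` against the two expressions
for `N` gives the refined Campbell formula, and with it the Palm property.
-/

open Set Filter

section TranslationInvariance

variable {α G : Type*} [MeasurableSpace α] [MeasurableSpace G] [AddCommGroup G]
  [MeasurableAdd₂ G] [MeasurableNeg G] {ν : Measure G} [SFinite ν] [ν.IsAddLeftInvariant]
  [ν.IsNegInvariant]

theorem measure_mul_lintegral_of_map_add_eq {N : Measure (α × G)} [SFinite N]
    (hN : ∀ g, N.map (fun p => (p.1, g + p.2)) = N) {B : Set G} (hB : MeasurableSet B)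
    {h : α × G → ℝ≥0∞} (hh : Measurable h) :
    ν B * ∫⁻ p, h p ∂N = ∫⁻ p in Prod.snd ⁻¹' B, ∫⁻ g, h (p.1, g) ∂ν ∂N := by
  set b : G → ℝ≥0∞ := B.indicator 1
  have hb : Measurable b := measurable_one.indicator hB
  have lintegral_b_sub (x : G) : ∫⁻ g, b (x - g) ∂ν = ν B := by
    rw [lintegral_sub_left_eq_self, lintegral_indicator_one hB]
  calc ν B * ∫⁻ p, h p ∂N
      = ∫⁻ p, ∫⁻ g, b (p.2 - g) * h p ∂ν ∂N := by
        rw [← lintegral_const_mul _ hh]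
        refine lintegral_congr fun p => ?_
        rw [lintegral_mul_const _ (by fun_prop), lintegral_b_sub]
    _ = ∫⁻ g, ∫⁻ p, b (p.2 - g) * h p ∂N ∂ν :=
        lintegral_lintegral_swap (by fun_prop)
    _ = ∫⁻ g, ∫⁻ p, b p.2 * h (p.1, g + p.2) ∂N ∂ν := by
        refine lintegral_congr fun g => ?_
        conv_lhs => rw [← hN g]
        rw [lintegral_map (by fun_prop) (by fun_prop)]
        simp only [add_sub_cancel_left]
    _ = ∫⁻ p, ∫⁻ g, b p.2 * h (p.1, g + p.2) ∂ν ∂N :=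
        lintegral_lintegral_swap (by fun_prop)
    _ = ∫⁻ p, (Prod.snd ⁻¹' B).indicator (fun p => ∫⁻ g, h (p.1, g) ∂ν) p ∂N := by
        refine lintegral_congr fun p => ?_
        rw [lintegral_const_mul _ (by fun_prop),
          lintegral_add_right_eq_self (fun g => h (p.1, g)) p.2]
        by_cases hp : p.2 ∈ B <;> simp [b, hp]
    _ = ∫⁻ p in Prod.snd ⁻¹' B, ∫⁻ g, h (p.1, g) ∂ν ∂N :=
        lintegral_indicator (measurable_snd hB) _

theorem eq_prod_of_map_add_eq {N : Measure (α × G)} [SFinite N]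
    (hN : ∀ g, N.map (fun p => (p.1, g + p.2)) = N) {B : Set G} (hB : MeasurableSet B)
    (hB₀ : ν B ≠ 0) (hB_top : ν B ≠ ⊤) :
    N = ((ν B)⁻¹ • (N.restrict (Prod.snd ⁻¹' B)).fst).prod ν := by
  refine Measure.ext_of_lintegral _ fun h hh => ?_
  rw [lintegral_prod _ hh.aemeasurable, lintegral_smul_measure, Measure.fst,
    lintegral_map hh.lintegral_prod_right' measurable_fst,
    ← measure_mul_lintegral_of_map_add_eq hN hB hh, smul_eq_mul, ← mul_assoc,
    ENNReal.inv_mul_cancel hB₀ hB_top, one_mul]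

end TranslationInvariance

theorem map_eq_of_map_skew_prod_eq {α G : Type*} [MeasurableSpace α] [MeasurableSpace G]
    [AddGroup G] [MeasurableAdd₂ G] {ν : Measure G} [SFinite ν] [ν.IsAddRightInvariant]
    {μ : Measure α} {B : Set G} (hB : MeasurableSet B) (hB₀ : ν B ≠ 0) (hB_top : ν B ≠ ⊤)
    {T : α → α} (hT : Measurable T) {c : α → G} (hc : Measurable c)
    (hμ : (μ.prod ν).map (fun p => (T p.1, p.2 + c p.1)) = μ.prod ν) :
    μ.map T = μ := by
  refine Measure.ext_of_lintegral _ fun f hf => ?_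
  set b : G → ℝ≥0∞ := B.indicator 1
  have hb : Measurable b := measurable_one.indicator hB
  have lintegral_b : ∫⁻ x, b x ∂ν = ν B := lintegral_indicator_one hB
  have : (∫⁻ a, f (T a) ∂μ) * ν B = (∫⁻ a, f a ∂μ) * ν B :=
    calc (∫⁻ a, f (T a) ∂μ) * ν B
        = ∫⁻ a, ∫⁻ x, f (T a) * b (x + c a) ∂ν ∂μ := by
          rw [← lintegral_mul_const _ (by fun_prop)]
          refine lintegral_congr fun a => ?_
          rw [lintegral_const_mul _ (by fun_prop), lintegral_add_right_eq_self, lintegral_b]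
      _ = ∫⁻ p, f p.1 * b p.2 ∂(μ.prod ν).map (fun p => (T p.1, p.2 + c p.1)) := by
          rw [lintegral_map (by fun_prop) (by fun_prop), lintegral_prod _ (by fun_prop)]
      _ = (∫⁻ a, f a ∂μ) * ν B := by
          rw [hμ, lintegral_prod_mul hf.aemeasurable hb.aemeasurable, lintegral_b]
  rw [lintegral_map hf hT]
  exact (ENNReal.mul_left_inj hB₀ hB_top).1 this

/-- The signed mass function of a measure on the line: `μ (0, t]` for `0 ≤ t` and `-μ (t, 0]` for
`t ≤ 0`. -/
noncomputable def signedMass (μ : Measure ℝ) (t : ℝ) : ℝ := ∫ _ in (0 : ℝ)..t, (1 : ℝ) ∂μ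

/-- Both half-lines carry infinite mass. -/
structure HasInfiniteTails (μ : Measure ℝ) : Prop where
  measure_Iio_zero : μ (Iio 0) = ⊤
  measure_Ioi_zero : μ (Ioi 0) = ⊤

section SignedMass

variable {μ : Measure ℝ}

@[simp]
theorem signedMass_zero : signedMass μ 0 = 0 := intervalIntegral.integral_same

variable [IsLocallyFiniteMeasure μ]

theorem signedMass_sub_signedMass (a b : ℝ) :
    signedMass μ b - signedMass μ a = μ.real (Ioc a b) - μ.real (Ioc b a) := by
  simp only [signedMass]
  rw [intervalIntegral.integral_interval_sub_left intervalIntegrable_const intervalIntegrable_const,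
    intervalIntegral.integral_const', smul_eq_mul, mul_one]

theorem measure_Ioc_eq_ofReal_signedMass_sub {a b : ℝ} (hab : a ≤ b) :
    μ (Ioc a b) = ENNReal.ofReal (signedMass μ b - signedMass μ a) := by
  rw [signedMass_sub_signedMass, Ioc_eq_empty hab.not_gt, measureReal_empty, sub_zero,
    ofReal_measureReal measure_Ioc_lt_top.ne]

theorem monotone_signedMass : Monotone (signedMass μ) := fun a b hab => by
  rw [← sub_nonneg, signedMass_sub_signedMass, Ioc_eq_empty hab.not_gt, measureReal_empty, sub_zero]
  exact measureReal_nonneg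

theorem signedMass_of_map_add_right_eq {μ' : Measure ℝ} {t : ℝ}
    (h : μ'.map (· + t) = μ) (s : ℝ) :
    signedMass μ' s = signedMass μ (s + t) - signedMass μ t := by
  have real_Ioc (a b : ℝ) : μ.real (Ioc (a + t) (b + t)) = μ'.real (Ioc a b) := by
    rw [← h, map_measureReal_apply (by fun_prop) measurableSet_Ioc, preimage_add_const_Ioc,
      add_sub_cancel_right, add_sub_cancel_right]
  have shifted := signedMass_sub_signedMass (μ := μ) (0 + t) (s + t)
  rw [real_Ioc, real_Ioc, zero_add] at shifted
  rw [shifted, signedMass, intervalIntegral.integral_const', smul_eq_mul, mul_one]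

theorem HasInfiniteTails.of_map_add_right_eq {μ' : Measure ℝ} {t : ℝ}
    (h : μ'.map (· + t) = μ) (hμ : HasInfiniteTails μ) : HasInfiniteTails μ' := by
  have measure_preimage {C : Set ℝ} (hC : MeasurableSet C) : μ' ((· + t) ⁻¹' C) = μ C := by
    rw [← h, Measure.map_apply (by fun_prop) hC]
  have measure_eq_top {C D : Set ℝ} (hC : μ C = ⊤) (hCD : C ⊆ D ∪ uIcc 0 t) : μ D = ⊤ := by
    by_contra hD
    have hfinite : μ (D ∪ uIcc 0 t) < ⊤ :=
      measure_union_lt_top (lt_top_iff_ne_top.2 hD) isCompact_uIcc.measure_lt_top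
    exact hfinite.ne (measure_mono_top hCD hC)
  constructor
  · rw [← sub_self t, ← preimage_add_const_Iio, measure_preimage measurableSet_Iio]
    refine measure_eq_top hμ.measure_Iio_zero fun x (hx : x < 0) => ?_
    exact (lt_or_ge x t).imp_right fun htx => mem_uIcc.2 (Or.inr ⟨htx, hx.le⟩)
  · rw [← sub_self t, ← preimage_add_const_Ioi, measure_preimage measurableSet_Ioi]
    refine measure_eq_top hμ.measure_Ioi_zero fun x (hx : 0 < x) => ?_
    exact (lt_or_ge t x).imp_right fun hxt => mem_uIcc.2 (Or.inl ⟨hx.le, hxt⟩)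

theorem HasInfiniteTails.tendsto_signedMass_atBot (hμ : HasInfiniteTails μ) :
    Tendsto (signedMass μ) atBot atBot := by
  have hIic : μ (Iic 0) = ⊤ := measure_mono_top Iio_subset_Iic_self hμ.measure_Iio_zero
  rw [← tendsto_neg_atTop_iff, ← ENNReal.tendsto_ofReal_nhds_top, ← hIic]
  refine (tendsto_measure_Ioc_atBot μ 0).congr' ?_
  filter_upwards [eventually_le_atBot 0] with t ht
  rw [measure_Ioc_eq_ofReal_signedMass_sub ht, signedMass_zero, zero_sub]

variable [NullSingletonClass μ]

theorem continuous_signedMass : Continuous (signedMass μ) :=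
  intervalIntegral.continuous_primitive (fun _ _ => intervalIntegrable_const) 0

namespace HasInfiniteTails

theorem tendsto_signedMass_atTop (hμ : HasInfiniteTails μ) :
    Tendsto (signedMass μ) atTop atTop := by
  have hIci : μ (Ici 0) = ⊤ := measure_mono_top Ioi_subset_Ici_self hμ.measure_Ioi_zero
  rw [← ENNReal.tendsto_ofReal_nhds_top, ← hIci]
  refine (tendsto_measure_Ico_atTop μ 0).congr' ?_
  filter_upwards [eventually_ge_atTop 0] with t ht
  rw [measure_congr Ico_ae_eq_Ioc, measure_Ioc_eq_ofReal_signedMass_sub ht, signedMass_zero,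
    sub_zero]

theorem exists_isGreatest_signedMass_eq (hμ : HasInfiniteTails μ) (r : ℝ) :
    ∃ m, IsGreatest {t | signedMass μ t = r} m := by
  have hclosed : IsClosed {t | signedMass μ t = r} :=
    isClosed_eq continuous_signedMass continuous_const
  have hne : {t | signedMass μ t = r}.Nonempty :=
    continuous_signedMass.surjective hμ.tendsto_signedMass_atTop hμ.tendsto_signedMass_atBot r
  obtain ⟨u, hu⟩ := (hμ.tendsto_signedMass_atTop.eventually_gt_atTop r).exists
  have hbdd : BddAbove {t | signedMass μ t = r} :=
    ⟨u, fun t (ht : signedMass μ t = r) => (monotone_signedMass.reflect_lt (ht ▸ hu)).le⟩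
  exact ⟨_, hclosed.isGreatest_csSup hne hbdd⟩

end HasInfiniteTails

end SignedMass

section Inverse

variable {Ω : Type*} [MeasurableSpace Ω] {ξ : Kernel Ω ℝ}

theorem measurableSet_hasInfiniteTails : MeasurableSet {ω | HasInfiniteTails (ξ ω)} := by
  have : {ω | HasInfiniteTails (ξ ω)} = {ω | ξ ω (Iio 0) = ⊤} ∩ {ω | ξ ω (Ioi 0) = ⊤} :=
    Set.ext fun ω => ⟨fun h => ⟨h.1, h.2⟩, fun h => ⟨h.1, h.2⟩⟩
  rw [this]
  exact (ξ.measurable_coe measurableSet_Iio (measurableSet_singleton ⊤)).inter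
    (ξ.measurable_coe measurableSet_Ioi (measurableSet_singleton ⊤))

theorem isGreatest_Sr {ω : Ω} [IsLocallyFiniteMeasure (ξ ω)] [NullSingletonClass (ξ ω)]
    (hω : HasInfiniteTails (ξ ω)) (r : ℝ) :
    IsGreatest {t | signedMass (ξ ω) t = r} (Sr ξ r ω) := by
  obtain ⟨m, hm, hmax⟩ := hω.exists_isGreatest_signedMass_eq r
  suffices Sr ξ r ω = m from this ▸ ⟨hm, hmax⟩
  have hmono := monotone_signedMass (μ := ξ ω)
  rw [Sr]
  split_ifs with hr
  · have mem_iff {t : ℝ} (ht : 0 ≤ t) :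
        ξ ω (Icc 0 t) = ENNReal.ofReal r ↔ signedMass (ξ ω) t = r := by
      have h0 : 0 ≤ signedMass (ξ ω) t := signedMass_zero (μ := ξ ω) ▸ hmono ht
      rw [← measure_congr Ioc_ae_eq_Icc, measure_Ioc_eq_ofReal_signedMass_sub ht, signedMass_zero,
        sub_zero, ENNReal.ofReal_eq_ofReal_iff h0 hr]
    have hm0 : 0 ≤ m := by
      by_contra! hneg
      have h0 : signedMass (ξ ω) 0 = r :=
        le_antisymm (signedMass_zero.trans_le hr) (hm ▸ hmono hneg.le)
      exact hneg.not_ge (hmax h0)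
    exact IsGreatest.csSup_eq ⟨⟨hm0, (mem_iff hm0).2 hm⟩, fun t ht => hmax ((mem_iff ht.1).1 ht.2)⟩
  · have mem_iff {t : ℝ} (ht : t < 0) :
        ξ ω (Icc t 0) = ENNReal.ofReal (-r) ↔ signedMass (ξ ω) t = r := by
      have h0 : signedMass (ξ ω) t ≤ 0 := signedMass_zero (μ := ξ ω) ▸ hmono ht.le
      rw [← measure_congr Ioc_ae_eq_Icc, measure_Ioc_eq_ofReal_signedMass_sub ht.le,
        signedMass_zero, zero_sub,
        ENNReal.ofReal_eq_ofReal_iff (neg_nonneg.2 h0) (neg_nonneg.2 (not_le.1 hr).le), neg_inj]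
    have hm0 : m < 0 := hmono.reflect_lt (by rw [hm, signedMass_zero]; exact not_le.1 hr)
    exact IsGreatest.csSup_eq ⟨⟨hm0, (mem_iff hm0).2 hm⟩, fun t ht => hmax ((mem_iff ht.1).1 ht.2)⟩

theorem signedMass_Sr {ω : Ω} [IsLocallyFiniteMeasure (ξ ω)] [NullSingletonClass (ξ ω)]
    (hω : HasInfiniteTails (ξ ω)) (r : ℝ) : signedMass (ξ ω) (Sr ξ r ω) = r :=
  (isGreatest_Sr hω r).1

theorem Sr_lt_iff {ω : Ω} [IsLocallyFiniteMeasure (ξ ω)] [NullSingletonClass (ξ ω)]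
    (hω : HasInfiniteTails (ξ ω)) {r t : ℝ} : Sr ξ r ω < t ↔ r < signedMass (ξ ω) t := by
  constructor
  · intro h
    have hle : r ≤ signedMass (ξ ω) t :=
      (signedMass_Sr hω r).symm.trans_le (monotone_signedMass h.le)
    exact hle.lt_of_ne fun heq => h.not_ge ((isGreatest_Sr hω r).2 heq.symm)
  · intro h
    rw [← signedMass_Sr hω r] at h
    exact monotone_signedMass.reflect_lt h

variable [∀ ω, IsLocallyFiniteMeasure (ξ ω)] [∀ ω, NullSingletonClass (ξ ω)]

theorem measurable_signedMass : Measurable fun p : Ω × ℝ => signedMass (ξ p.1) p.2 := by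
  have h : Measurable (Function.uncurry fun (t : ℝ) (ω : Ω) => signedMass (ξ ω) t) := by
    refine measurable_uncurry_of_continuous_of_measurable (fun _ => continuous_signedMass) ?_
    intro t
    simp only [signedMass, intervalIntegral.integral_const', smul_eq_mul, mul_one]
    exact (ξ.measurable_coe measurableSet_Ioc).ennreal_toReal.sub
      (ξ.measurable_coe measurableSet_Ioc).ennreal_toReal
  exact h.comp measurable_swap

theorem aemeasurable_Sr {β : Type*} [MeasurableSpace β] {m : Measure β} {R : β → ℝ} {X : β → Ω}
    (hR : Measurable R) (hX : Measurable X) (htails : ∀ᵐ b ∂m, HasInfiniteTails (ξ (X b))) :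
    AEMeasurable (fun b => Sr ξ (R b) (X b)) m := by
  set good : Set β := X ⁻¹' {ω | HasInfiniteTails (ξ ω)}
  have hgood : ∀ᵐ b ∂m, b ∈ good := htails
  rw [← Measure.restrict_eq_self_of_ae_mem hgood]
  refine aemeasurable_restrict_of_measurable_subtype (hX measurableSet_hasInfiniteTails) ?_
  refine measurable_of_Iio fun t => ?_
  have hpre : (fun b : good => Sr ξ (R b) (X b)) ⁻¹' Iio t =
      {b : good | R b < signedMass (ξ (X b)) t} :=
    Set.ext fun b => Sr_lt_iff b.2
  rw [hpre]
  exact measurableSet_lt (hR.comp measurable_subtype_coe)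
    (measurable_signedMass.comp ((hX.comp measurable_subtype_coe).prodMk measurable_const))

theorem map_Sr_volume {ω : Ω} (hω : HasInfiniteTails (ξ ω)) :
    volume.map (fun r => Sr ξ r ω) = ξ ω := by
  have hS : AEMeasurable (fun r => Sr ξ r ω) volume :=
    aemeasurable_Sr measurable_id measurable_const (ae_of_all _ fun _ => hω)
  refine (Measure.ext_of_Ico _ _ fun a b hab => ?_).symm
  have hpre : (fun r => Sr ξ r ω) ⁻¹' Ico a b = Ico (signedMass (ξ ω) a) (signedMass (ξ ω) b) := by
    ext r
    rw [mem_preimage, mem_Ico, mem_Ico, Sr_lt_iff hω, ← not_lt, Sr_lt_iff hω, not_lt]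
  rw [Measure.map_apply_of_aemeasurable hS measurableSet_Ico, hpre, Real.volume_Ico,
    measure_congr Ico_ae_eq_Ioc, measure_Ioc_eq_ofReal_signedMass_sub hab.le]

end Inverse

/-- Equivariance of a random measure under the flow `t +ᵥ ω`: seen from `t`, the measure is
shifted by `-t`. -/
def IsEquivariant {Ω : Type*} [MeasurableSpace Ω] [VAdd ℝ Ω] (ξ : Kernel Ω ℝ) : Prop :=
  ∀ (t : ℝ) (ω : Ω), (ξ (t +ᵥ ω)).map (· + t) = ξ ω

/-- Mass-stationarity of `Q` with respect to `ξ`: moving the origin forward by any amount `r` of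
`ξ`-mass leaves `Q` unchanged. -/
def IsMassStationary {Ω : Type*} [MeasurableSpace Ω] [VAdd ℝ Ω] (ξ : Kernel Ω ℝ)
    (Q : Measure Ω) : Prop :=
  ∀ r : ℝ, Q.map (fun ω => Sr ξ r ω +ᵥ ω) = Q

/-- The law of `(s +ᵥ ω, signedMass (ξ ω) s)` under `Q(dω) ds`: the configuration seen from a
uniform location, together with the signed mass between the original origin and that location. -/
noncomputable def orbitMeasure {Ω : Type*} [MeasurableSpace Ω] [VAdd ℝ Ω] (ξ : Kernel Ω ℝ)
    (Q : Measure Ω) : Measure (Ω × ℝ) :=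
  (Q.prod volume).map fun p => (p.2 +ᵥ p.1, signedMass (ξ p.1) p.2)

namespace IsEquivariant

variable {Ω : Type*} [MeasurableSpace Ω] [VAdd ℝ Ω] {ξ : Kernel Ω ℝ}
  [∀ ω, IsLocallyFiniteMeasure (ξ ω)]

theorem signedMass_vadd (hξ : IsEquivariant ξ) (s t : ℝ) (ω : Ω) :
    signedMass (ξ (t +ᵥ ω)) s = signedMass (ξ ω) (s + t) - signedMass (ξ ω) t :=
  signedMass_of_map_add_right_eq (hξ t ω) s

theorem hasInfiniteTails_vadd (hξ : IsEquivariant ξ) {ω : Ω} (hω : HasInfiniteTails (ξ ω))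
    (t : ℝ) : HasInfiniteTails (ξ (t +ᵥ ω)) :=
  hω.of_map_add_right_eq (hξ t ω)

theorem Sr_vadd [∀ ω, NullSingletonClass (ξ ω)] (hξ : IsEquivariant ξ) {ω : Ω}
    (hω : HasInfiniteTails (ξ ω)) (r s : ℝ) :
    Sr ξ r (s +ᵥ ω) = Sr ξ (r + signedMass (ξ ω) s) ω - s := by
  refine eq_of_forall_gt_iff fun t => ?_
  rw [Sr_lt_iff (hξ.hasInfiniteTails_vadd hω s), hξ.signedMass_vadd, sub_lt_iff_lt_add,
    Sr_lt_iff hω, lt_sub_iff_add_lt]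

end IsEquivariant

section OrbitMeasure

variable {Ω : Type*} [MeasurableSpace Ω] [VAdd ℝ Ω] [MeasurableVAdd₂ ℝ Ω] {ξ : Kernel Ω ℝ}
  [∀ ω, IsLocallyFiniteMeasure (ξ ω)] [∀ ω, NullSingletonClass (ξ ω)] {Q : Measure Ω}

theorem aemeasurable_Sr_vadd (htails : ∀ᵐ ω ∂Q, HasInfiniteTails (ξ ω)) (r : ℝ) :
    AEMeasurable (fun ω => Sr ξ r ω +ᵥ ω) Q :=
  (aemeasurable_Sr measurable_const measurable_id htails).vadd aemeasurable_id

theorem measurable_vadd_prodMk_signedMass :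
    Measurable fun p : Ω × ℝ => (p.2 +ᵥ p.1, signedMass (ξ p.1) p.2) :=
  (measurable_snd.vadd measurable_fst).prodMk measurable_signedMass

theorem lintegral_orbitMeasure {h : Ω × ℝ → ℝ≥0∞} (hh : AEMeasurable h (orbitMeasure ξ Q)) :
    ∫⁻ p, h p ∂orbitMeasure ξ Q = ∫⁻ ω, ∫⁻ s, h (s +ᵥ ω, signedMass (ξ ω) s) ∂volume ∂Q := by
  have hΨ := measurable_vadd_prodMk_signedMass (ξ := ξ)
  rw [orbitMeasure, lintegral_map' hh hΨ.aemeasurable]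
  exact lintegral_prod _ (hh.comp_measurable hΨ)

theorem ae_hasInfiniteTails_orbitMeasure (hξ : IsEquivariant ξ)
    (htails : ∀ᵐ ω ∂Q, HasInfiniteTails (ξ ω)) :
    ∀ᵐ p ∂orbitMeasure ξ Q, HasInfiniteTails (ξ p.1) := by
  have hset : MeasurableSet {p : Ω × ℝ | HasInfiniteTails (ξ p.1)} :=
    measurable_fst measurableSet_hasInfiniteTails
  rw [orbitMeasure, ae_map_iff measurable_vadd_prodMk_signedMass.aemeasurable hset]
  filter_upwards [Measure.quasiMeasurePreserving_fst.ae htails] with p hp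
  exact hξ.hasInfiniteTails_vadd hp p.2

end OrbitMeasure

section Flow

variable {Ω : Type*} [MeasurableSpace Ω] [AddAction ℝ Ω] {ξ : Kernel Ω ℝ}
  [∀ ω, IsLocallyFiniteMeasure (ξ ω)]

theorem IsEquivariant.lintegral_orbit_vadd (hξ : IsEquivariant ξ) (h : Ω × ℝ → ℝ≥0∞) (u : ℝ)
    (ω : Ω) :
    ∫⁻ s : ℝ, h (s +ᵥ u +ᵥ ω, signedMass (ξ (u +ᵥ ω)) s) =
      ∫⁻ s : ℝ, h (s +ᵥ ω, signedMass (ξ ω) s - signedMass (ξ ω) u) := by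
  conv_rhs => rw [← lintegral_add_right_eq_self _ u]
  simp only [hξ.signedMass_vadd, vadd_vadd]

variable [MeasurableVAdd₂ ℝ Ω] [∀ ω, NullSingletonClass (ξ ω)] {Q Qstar : Measure Ω}

theorem IsEquivariant.map_vadd_orbitMeasure (hξ : IsEquivariant ξ) (t : ℝ) :
    (orbitMeasure ξ Q).map (fun p => (t +ᵥ p.1, p.2 + signedMass (ξ p.1) t)) =
      orbitMeasure ξ Q := by
  have hmass : Measurable fun ω => signedMass (ξ ω) t :=
    measurable_signedMass.comp measurable_prodMk_right
  have hskew : Measurable fun p : Ω × ℝ => (t +ᵥ p.1, p.2 + signedMass (ξ p.1) t) :=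
    ((measurable_const_vadd t).comp measurable_fst).prodMk
      (measurable_snd.add (hmass.comp measurable_fst))
  refine Measure.ext_of_lintegral _ fun h hh => ?_
  rw [lintegral_map hh hskew, lintegral_orbitMeasure (by fun_prop),
    lintegral_orbitMeasure hh.aemeasurable]
  refine lintegral_congr fun ω => ?_
  conv_rhs => rw [← lintegral_add_left_eq_self _ t]
  simp only [hξ.signedMass_vadd, vadd_vadd, add_sub_cancel]

namespace IsMassStationary

theorem map_add_orbitMeasure (hQ : IsMassStationary ξ Q) (hξ : IsEquivariant ξ)
    (htails : ∀ᵐ ω ∂Q, HasInfiniteTails (ξ ω)) (r : ℝ) :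
    (orbitMeasure ξ Q).map (fun p => (p.1, r + p.2)) = orbitMeasure ξ Q := by
  refine Measure.ext_of_lintegral _ fun h hh => ?_
  have horbit : Measurable fun ω => ∫⁻ s : ℝ, h (s +ᵥ ω, signedMass (ξ ω) s) :=
    (hh.comp measurable_vadd_prodMk_signedMass).lintegral_prod_right'
  rw [lintegral_map hh (by fun_prop), lintegral_orbitMeasure (by fun_prop),
    lintegral_orbitMeasure hh.aemeasurable]
  conv_rhs => rw [← hQ (-r)]
  rw [lintegral_map' horbit.aemeasurable (aemeasurable_Sr_vadd htails (-r))]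
  refine lintegral_congr_ae ?_
  filter_upwards [htails] with ω hω
  simp only [hξ.lintegral_orbit_vadd, signedMass_Sr hω, sub_neg_eq_add, add_comm r]

theorem ae_Sr_zero_eq_zero (hQ : IsMassStationary ξ Q) (hξ : IsEquivariant ξ)
    (htails : ∀ᵐ ω ∂Q, HasInfiniteTails (ξ ω)) : ∀ᵐ ω ∂Q, Sr ξ 0 ω = 0 := by
  have hS : AEMeasurable (Sr ξ 0) Q := aemeasurable_Sr measurable_const measurable_id htails
  have hnull : NullMeasurableSet {ω | ¬Sr ξ 0 ω = 0} Q :=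
    hS.nullMeasurable (measurableSet_singleton 0).compl
  rw [ae_iff, ← hQ 0,
    Measure.map_apply₀ (aemeasurable_Sr_vadd htails 0) ((hQ 0).symm ▸ hnull)]
  change ∀ᵐ ω ∂Q, Sr ξ 0 (Sr ξ 0 ω +ᵥ ω) = 0
  filter_upwards [htails] with ω hω
  rw [hξ.Sr_vadd hω, signedMass_Sr hω, add_zero, sub_self]

theorem lintegral_fst_restrict_orbitMeasure (hQ : IsMassStationary ξ Q) (hξ : IsEquivariant ξ)
    (htails : ∀ᵐ ω ∂Q, HasInfiniteTails (ξ ω)) (w : ℝ) {f : Ω → ℝ≥0∞} (hf : Measurable f) :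
    ∫⁻ ω, f ω ∂((orbitMeasure ξ Q).restrict (Prod.snd ⁻¹' Ioc 0 w)).fst =
      ∫⁻ ω, ∫⁻ s in Ioc 0 (Sr ξ w ω), f (s +ᵥ ω) ∂volume ∂Q := by
  have hB : MeasurableSet (Prod.snd ⁻¹' Ioc 0 w : Set (Ω × ℝ)) := measurable_snd measurableSet_Ioc
  rw [Measure.fst, lintegral_map hf measurable_fst, ← lintegral_indicator hB,
    lintegral_orbitMeasure (AEMeasurable.indicator (by fun_prop) hB)]
  refine lintegral_congr_ae ?_
  filter_upwards [htails, hQ.ae_Sr_zero_eq_zero hξ htails] with ω hω hω₀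
  have mem_iff (s : ℝ) : signedMass (ξ ω) s ∈ Ioc 0 w ↔ s ∈ Ioc 0 (Sr ξ w ω) := by
    rw [mem_Ioc, mem_Ioc, ← Sr_lt_iff hω, hω₀, ← not_lt, ← Sr_lt_iff hω, not_lt]
  rw [← lintegral_indicator measurableSet_Ioc]
  refine lintegral_congr fun s => ?_
  simp only [indicator, mem_preimage, mem_iff]

theorem orbitMeasure_eq_prod [SFinite Q] (hQ : IsMassStationary ξ Q) (hξ : IsEquivariant ξ)
    (htails : ∀ᵐ ω ∂Q, HasInfiniteTails (ξ ω)) {w : ℝ} (hw : 0 < w)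
    (hQstar : ∀ f : Ω → ℝ≥0∞, Measurable f → ∫⁻ ω, f ω ∂Qstar =
      (ENNReal.ofReal w)⁻¹ * ∫⁻ ω, ∫⁻ s in Ioc 0 (Sr ξ w ω), f (s +ᵥ ω) ∂volume ∂Q) :
    orbitMeasure ξ Q = Qstar.prod volume := by
  have hvol : volume (Ioc 0 w) = ENNReal.ofReal w := by rw [Real.volume_Ioc, sub_zero]
  have : SFinite (orbitMeasure ξ Q) := by unfold orbitMeasure; infer_instance
  have hfst : Qstar =
      (volume (Ioc 0 w))⁻¹ • ((orbitMeasure ξ Q).restrict (Prod.snd ⁻¹' Ioc 0 w)).fst := by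
    refine Measure.ext_of_lintegral _ fun f hf => ?_
    rw [hQstar f hf, lintegral_smul_measure, smul_eq_mul, hvol,
      hQ.lintegral_fst_restrict_orbitMeasure hξ htails w hf]
  rw [hfst]
  refine eq_prod_of_map_add_eq (hQ.map_add_orbitMeasure hξ htails) measurableSet_Ioc ?_ ?_
  · rwa [hvol, ENNReal.ofReal_ne_zero_iff]
  · rw [hvol]; exact ENNReal.ofReal_ne_top

end IsMassStationary

namespace IsEquivariant

theorem map_vadd_eq_of_orbitMeasure_eq_prod (hξ : IsEquivariant ξ)
    (hprod : orbitMeasure ξ Q = Qstar.prod volume) (t : ℝ) : Qstar.map (t +ᵥ ·) = Qstar := by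
  have hmass : Measurable fun ω => signedMass (ξ ω) t :=
    measurable_signedMass.comp measurable_prodMk_right
  refine map_eq_of_map_skew_prod_eq (ν := volume) (B := Icc (0 : ℝ) 1) measurableSet_Icc
    (by simp) (by simp) (measurable_const_vadd t) hmass ?_
  rw [← hprod]
  exact hξ.map_vadd_orbitMeasure t

theorem ae_hasInfiniteTails_of_orbitMeasure_eq_prod (hξ : IsEquivariant ξ)
    (htails : ∀ᵐ ω ∂Q, HasInfiniteTails (ξ ω)) (hprod : orbitMeasure ξ Q = Qstar.prod volume) :
    ∀ᵐ ω ∂Qstar, HasInfiniteTails (ξ ω) := by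
  have h := ae_hasInfiniteTails_orbitMeasure hξ htails
  rw [hprod] at h
  filter_upwards [Measure.ae_ae_of_ae_prod h] with ω hω
  exact eventually_const.1 hω

theorem lintegral_campbell (hξ : IsEquivariant ξ)
    (htails : ∀ᵐ ω ∂Q, HasInfiniteTails (ξ ω)) (hS₀ : ∀ᵐ ω ∂Q, Sr ξ 0 ω = 0)
    (hprod : orbitMeasure ξ Q = Qstar.prod volume) {g : ℝ × Ω → ℝ≥0∞} (hg : Measurable g) :
    ∫⁻ ω, ∫⁻ s, g (s, s +ᵥ ω) ∂ξ ω ∂Qstar = ∫⁻ ω, ∫⁻ s, g (s, ω) ∂volume ∂Q := by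
  have htails' := ae_hasInfiniteTails_orbitMeasure hξ htails
  set h : Ω × ℝ → ℝ≥0∞ := fun p => g (Sr ξ (-p.2) p.1, Sr ξ (-p.2) p.1 +ᵥ p.1)
  have hh : AEMeasurable h (orbitMeasure ξ Q) := by
    have hS : AEMeasurable (fun p : Ω × ℝ => Sr ξ (-p.2) p.1) (orbitMeasure ξ Q) :=
      aemeasurable_Sr measurable_snd.neg measurable_fst htails'
    exact hg.comp_aemeasurable (hS.prodMk (hS.vadd measurable_fst.aemeasurable))
  have lintegral_ξ (ω : Ω) (hω : HasInfiniteTails (ξ ω)) :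
      ∫⁻ s, g (s, s +ᵥ ω) ∂ξ ω = ∫⁻ x, h (ω, x) := by
    have hgω : Measurable fun s : ℝ => g (s, s +ᵥ ω) := by fun_prop
    have hS : AEMeasurable (fun r => Sr ξ r ω) :=
      aemeasurable_Sr measurable_id measurable_const (ae_of_all _ fun _ => hω)
    rw [← map_Sr_volume hω, lintegral_map' hgω.aemeasurable hS,
      ← lintegral_neg_eq_self fun x => h (ω, x)]
    simp only [h, neg_neg]
  have h_orbit (ω : Ω) (hω : HasInfiniteTails (ξ ω)) (hω₀ : Sr ξ 0 ω = 0) (s : ℝ) :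
      h (s +ᵥ ω, signedMass (ξ ω) s) = g (-s, ω) := by
    simp only [h, hξ.Sr_vadd hω, neg_add_cancel, hω₀, zero_sub, neg_vadd_vadd]
  calc ∫⁻ ω, ∫⁻ s, g (s, s +ᵥ ω) ∂ξ ω ∂Qstar
      = ∫⁻ ω, ∫⁻ x, h (ω, x) ∂volume ∂Qstar :=
        lintegral_congr_ae ((hξ.ae_hasInfiniteTails_of_orbitMeasure_eq_prod htails hprod).mono
          lintegral_ξ)
    _ = ∫⁻ p, h p ∂orbitMeasure ξ Q := by rw [hprod, lintegral_prod _ (hprod ▸ hh)]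
    _ = ∫⁻ ω, ∫⁻ s, g (-s, ω) ∂volume ∂Q := by
        rw [lintegral_orbitMeasure hh]
        refine lintegral_congr_ae ?_
        filter_upwards [htails, hS₀] with ω hω hω₀
        exact lintegral_congr (h_orbit ω hω hω₀)
    _ = ∫⁻ ω, ∫⁻ s, g (s, ω) ∂volume ∂Q :=
        lintegral_congr fun ω => lintegral_neg_eq_self fun s => g (s, ω)

theorem lintegral_palm (hξ : IsEquivariant ξ)
    (htails : ∀ᵐ ω ∂Q, HasInfiniteTails (ξ ω)) (hS₀ : ∀ᵐ ω ∂Q, Sr ξ 0 ω = 0)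
    (hprod : orbitMeasure ξ Q = Qstar.prod volume) {B : Set ℝ} (hB : MeasurableSet B)
    {f : Ω → ℝ≥0∞} (hf : Measurable f) :
    ∫⁻ ω, ∫⁻ s in B, f (s +ᵥ ω) ∂ξ ω ∂Qstar = volume B * ∫⁻ ω, f ω ∂Q := by
  have campbell := hξ.lintegral_campbell htails hS₀ hprod
    (g := fun p => B.indicator (fun _ => f p.2) p.1)
    ((hf.comp measurable_snd).indicator (measurable_fst hB))
  have lintegral_B (μ : Measure ℝ) (k : ℝ → ℝ≥0∞) :
      ∫⁻ s, B.indicator (fun _ => k s) s ∂μ = ∫⁻ s in B, k s ∂μ := lintegral_indicator hB k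
  simp only [lintegral_B, setLIntegral_const] at campbell
  rw [campbell, lintegral_mul_const _ hf, mul_comm]

end IsEquivariant

end Flow

/-- if `Q` is invariant under `ω ↦ θ_{S_r(ω)}(ω)` for every `r`, then for any
`w > 0` the measure `Q*` defined by `∫ f dQ* = w⁻¹ ∫ ∫_0^{S_w(ω)} f(θ_s ω) ds Q(dω)` is
stationary, and `Q` is the Palm measure of `ξ` with respect to `Q*`. -/
theorem mass_stationary_implies_palm {Ω : Type*} [MeasurableSpace Ω]
    (θ : ℝ → Ω → Ω) (hθm : Measurable fun p : ℝ × Ω => θ p.1 p.2)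
    (hθ0 : θ 0 = id) (hθadd : ∀ s t : ℝ, θ (s + t) = θ s ∘ θ t)
    (ξ : Kernel Ω ℝ)
    (hdiffuse : ∀ (ω : Ω) (x : ℝ), ξ ω {x} = 0)
    (hlf : ∀ (ω : Ω) (K : Set ℝ), IsCompact K → ξ ω K < ⊤)
    (hequiv : ∀ (t : ℝ) (C : Set ℝ), MeasurableSet C →
      ∀ ω : Ω, ξ (θ t ω) {x : ℝ | x + t ∈ C} = ξ ω C)
    (Q : Measure Ω) [SigmaFinite Q]
    (hQleft : Q {ω | ξ ω (Set.Iio 0) < ⊤} = 0)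
    (hQright : Q {ω | ξ ω (Set.Ioi 0) < ⊤} = 0)
    (hshift : ∀ r : ℝ, Measure.map (fun ω => θ (Sr ξ r ω) ω) Q = Q)
    (w : ℝ) (hw : 0 < w)
    (Qstar : Measure Ω)
    (hQstar : ∀ f : Ω → ℝ≥0∞, Measurable f →
      ∫⁻ ω, f ω ∂Qstar =
        (ENNReal.ofReal w)⁻¹ * ∫⁻ ω, ∫⁻ s in Set.Ioc 0 (Sr ξ w ω), f (θ s ω) ∂volume ∂Q) :
    (∀ t : ℝ, Measure.map (θ t) Qstar = Qstar) ∧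
    (∀ f : Ω → ℝ≥0∞, Measurable f →
      ∫⁻ ω, ∫⁻ s in Set.Icc (0 : ℝ) 1, f (θ s ω) ∂(ξ ω) ∂Qstar = ∫⁻ ω, f ω ∂Q) := by
  have : ∀ ω, NullSingletonClass (ξ ω) := fun ω => ⟨hdiffuse ω⟩
  have : ∀ ω, IsLocallyFiniteMeasure (ξ ω) := fun ω =>
    have : IsFiniteMeasureOnCompacts (ξ ω) := ⟨fun K hK => hlf ω K hK⟩
    isLocallyFiniteMeasure_of_isFiniteMeasureOnCompacts
  let _ : AddAction ℝ Ω :=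
    { vadd := θ
      zero_vadd := congrFun hθ0
      add_vadd := fun s t => congrFun (hθadd s t) }
  have : MeasurableVAdd₂ ℝ Ω := ⟨hθm⟩
  have hξ : IsEquivariant ξ := fun t ω => Measure.ext fun C hC =>
    (Measure.map_apply (measurable_add_const t) hC).trans (hequiv t C hC ω)
  have htails : ∀ᵐ ω ∂Q, HasInfiniteTails (ξ ω) := by
    filter_upwards [measure_eq_zero_iff_ae_notMem.1 hQleft, measure_eq_zero_iff_ae_notMem.1 hQright]
      with ω hleft hright
    exact ⟨not_lt_top_iff.1 hleft, not_lt_top_iff.1 hright⟩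
  have hQ : IsMassStationary ξ Q := hshift
  have hprod : orbitMeasure ξ Q = Qstar.prod volume := hQ.orbitMeasure_eq_prod hξ htails hw hQstar
  refine ⟨hξ.map_vadd_eq_of_orbitMeasure_eq_prod hprod, fun f hf => ?_⟩
  have palm := hξ.lintegral_palm htails (hQ.ae_Sr_zero_eq_zero hξ htails) hprod
    (measurableSet_Icc (a := (0 : ℝ)) (b := 1)) hf
  rwa [Real.volume_Icc, sub_zero, ENNReal.ofReal_one, one_mul] at palm
end
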